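/- For all w^A, w^B ∈ ℝᵈ, the expected TD update satisfies ⟨w^A − w^B, ḡ(w^B) − ḡ(w^A)⟩ ≥ (1/L − γL)·Σ_s D(s)·(z_{w^A}(s) − z_{w^B}(s))². -/

import Mathlib

open scoped RealInnerProductSpace BigOperators
open Finset

/-- The per-sample TD update
`g(w; s, s') := (f(r(s,s') + γ⟨x(s'), w⟩) − f(⟨x(s), w⟩)) • x(s)`. -/
noncomputable def tdSample {S : Type*} {d : ℕ} (x : S → EuclideanSpace ℝ (Fin d))
    (r : S → S → ℝ) (γ : ℝ) (f : ℝ → ℝ) (w : EuclideanSpace ℝ (Fin d)) (s s' : S) :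
    EuclideanSpace ℝ (Fin d) :=
  (f (r s s' + γ * ⟪x s', w⟫) - f ⟪x s, w⟫) • x s

/-- The expected TD update `ḡ(w) := Σ_{s,s'} D(s) P(s,s') g(w; s, s')`. -/
noncomputable def tdExpected {S : Type*} [Fintype S] {d : ℕ} (D : S → ℝ) (P : S → S → ℝ)
    (x : S → EuclideanSpace ℝ (Fin d)) (r : S → S → ℝ) (γ : ℝ) (f : ℝ → ℝ)
    (w : EuclideanSpace ℝ (Fin d)) : EuclideanSpace ℝ (Fin d) :=
  ∑ s, ∑ s', (D s * P s s') • tdSample x r γ f w s s'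

/-! The inner product splits into a current-state part and a next-state part. Strong monotonicity of
`f` bounds the current-state part below by `1 / L` times `∑ s, D s * (z_A s - z_B s) ^ 2`. In the
next-state part the Lipschitz bound leaves `γ * L` times the correlation of `|z_A - z_B|` at
consecutive states; by stationarity both states have law `D`, so `2ab ≤ a² + b²` bounds this
correlation by the same sum. -/

open scoped NNReal

/-- `Q` is a coupling of the weights `μ` and `ν`: a nonnegative matrix with these row and column
sums. The total mass is not normalized. In TD learning, `Q` is the joint law of two consecutive
states. -/
structure IsCoupling {S T : Type*} [Fintype S] [Fintype T] (Q : S → T → ℝ) (μ : S → ℝ)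
    (ν : T → ℝ) : Prop where
  nonneg : ∀ s t, 0 ≤ Q s t
  sum_right : ∀ s, ∑ t, Q s t = μ s
  sum_left : ∀ t, ∑ s, Q s t = ν t

/-- Strong monotonicity with modulus `c`, the property of `f` that makes the current-state part of
the TD update coercive. -/
def StronglyMonotone (c : ℝ) (f : ℝ → ℝ) : Prop :=
  ∀ a b, c * (a - b) ^ 2 ≤ (a - b) * (f a - f b)

theorem stronglyMonotone_of_monotone {f : ℝ → ℝ} (hf : Monotone f) {c : ℝ}
    (hc : ∀ a b, c * |a - b| ≤ |f a - f b|) : StronglyMonotone c f := by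
  intro a b
  have hnonneg : 0 ≤ (f a - f b) * (a - b) := (monovary_id_iff.2 hf).sub_mul_sub_nonneg b a
  calc c * (a - b) ^ 2 = c * |a - b| * |a - b| := by rw [← sq_abs, sq, mul_assoc]
    _ ≤ |f a - f b| * |a - b| := by gcongr; exact hc a b
    _ = (a - b) * (f a - f b) := by rw [← abs_mul, abs_of_nonneg hnonneg, mul_comm]

theorem lipschitzWith_comp_add_mul {α : Type*} [PseudoEMetricSpace α] {f : ℝ → α} {K : ℝ≥0}
    (hf : LipschitzWith K f) (ρ γ : ℝ) :
    LipschitzWith (K * ‖γ‖₊) fun y => f (ρ + γ * y) :=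
  hf.comp <| LipschitzWith.of_dist_le_mul fun y y' => by
    simp [Real.dist_eq, ← mul_sub, abs_mul]

namespace IsCoupling

variable {S T : Type*} [Fintype S] [Fintype T] {Q : S → T → ℝ} {μ : S → ℝ} {ν : T → ℝ}

theorem sum_mul_fst (hQ : IsCoupling Q μ ν) (φ : S → ℝ) :
    ∑ s, ∑ t, Q s t * φ s = ∑ s, μ s * φ s := by
  simp only [← sum_mul, hQ.sum_right]

theorem sum_mul_snd (hQ : IsCoupling Q μ ν) (ψ : T → ℝ) :
    ∑ s, ∑ t, Q s t * ψ t = ∑ t, ν t * ψ t := by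
  rw [sum_comm]
  simp only [← sum_mul, hQ.sum_left]

theorem sum_le_sum (hQ : IsCoupling Q μ ν) {F G : S → T → ℝ} (hFG : ∀ s t, F s t ≤ G s t) :
    ∑ s, ∑ t, Q s t * F s t ≤ ∑ s, ∑ t, Q s t * G s t :=
  Finset.sum_le_sum fun s _ => Finset.sum_le_sum fun t _ =>
    mul_le_mul_of_nonneg_left (hFG s t) (hQ.nonneg s t)

theorem sum_mul_mul_le (hQ : IsCoupling Q μ ν) (φ : S → ℝ) (ψ : T → ℝ) :
    ∑ s, ∑ t, Q s t * (φ s * ψ t) ≤ (∑ s, μ s * φ s ^ 2 + ∑ t, ν t * ψ t ^ 2) / 2 :=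
  calc ∑ s, ∑ t, Q s t * (φ s * ψ t)
      ≤ ∑ s, ∑ t, Q s t * ((φ s ^ 2 + ψ t ^ 2) / 2) :=
        hQ.sum_le_sum fun s t => by linarith [two_mul_le_add_sq (φ s) (ψ t)]
    _ = (∑ s, ∑ t, Q s t * φ s ^ 2 + ∑ s, ∑ t, Q s t * ψ t ^ 2) / 2 := by
        simp only [← sum_add_distrib, sum_div, ← mul_add, mul_div_assoc]
    _ = (∑ s, μ s * φ s ^ 2 + ∑ t, ν t * ψ t ^ 2) / 2 := by
        rw [hQ.sum_mul_fst fun s => φ s ^ 2, hQ.sum_mul_snd fun t => ψ t ^ 2]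

theorem sum_mul_sub_le_of_lipschitzWith (hQ : IsCoupling Q μ ν) {K : ℝ≥0} {g : S → T → ℝ → ℝ}
    (hg : ∀ s t, LipschitzWith K (g s t)) (φ : S → ℝ) (u v : T → ℝ) :
    ∑ s, ∑ t, Q s t * (φ s * (g s t (u t) - g s t (v t))) ≤
      K * ((∑ s, μ s * φ s ^ 2 + ∑ t, ν t * (u t - v t) ^ 2) / 2) :=
  calc ∑ s, ∑ t, Q s t * (φ s * (g s t (u t) - g s t (v t)))
      ≤ ∑ s, ∑ t, Q s t * (K * (|φ s| * |u t - v t|)) := hQ.sum_le_sum fun s t =>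
        calc φ s * (g s t (u t) - g s t (v t))
            ≤ |φ s| * |g s t (u t) - g s t (v t)| := (le_abs_self _).trans_eq (abs_mul _ _)
          _ ≤ |φ s| * (K * |u t - v t|) := by gcongr; exact (hg s t).dist_le_mul (u t) (v t)
          _ = K * (|φ s| * |u t - v t|) := mul_left_comm _ _ _
    _ = K * ∑ s, ∑ t, Q s t * (|φ s| * |u t - v t|) := by
        simp only [mul_sum, mul_left_comm (K : ℝ)]
    _ ≤ K * ((∑ s, μ s * φ s ^ 2 + ∑ t, ν t * (u t - v t) ^ 2) / 2) := by
        gcongr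
        simpa only [sq_abs] using hQ.sum_mul_mul_le (fun s => |φ s|) fun t => |u t - v t|

theorem le_sum_mul_sub_of_stronglyMonotone (hQ : IsCoupling Q μ ν) {c : ℝ} {f : ℝ → ℝ}
    (hf : StronglyMonotone c f) (u v : S → ℝ) :
    c * ∑ s, μ s * (u s - v s) ^ 2 ≤
      ∑ s, ∑ t, Q s t * ((u s - v s) * (f (u s) - f (v s))) :=
  calc c * ∑ s, μ s * (u s - v s) ^ 2
      = ∑ s, ∑ t, Q s t * (c * (u s - v s) ^ 2) := by
        rw [hQ.sum_mul_fst fun s => c * (u s - v s) ^ 2]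
        simp only [mul_sum, mul_left_comm c]
    _ ≤ ∑ s, ∑ t, Q s t * ((u s - v s) * (f (u s) - f (v s))) :=
        hQ.sum_le_sum fun s _ => hf (u s) (v s)

end IsCoupling

section TD

variable {S : Type*} [Fintype S] {d : ℕ} (D : S → ℝ) (P : S → S → ℝ)

theorem inner_tdExpected_sub (x : S → EuclideanSpace ℝ (Fin d)) (r : S → S → ℝ) (γ : ℝ)
    (f : ℝ → ℝ) (v wA wB : EuclideanSpace ℝ (Fin d)) :
    ⟪v, tdExpected D P x r γ f wB - tdExpected D P x r γ f wA⟫ =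
      ∑ s, ∑ s', D s * P s s' * (⟪x s, v⟫ * (f ⟪x s, wA⟫ - f ⟪x s, wB⟫)) -
        ∑ s, ∑ s', D s * P s s' *
          (⟪x s, v⟫ * (f (r s s' + γ * ⟪x s', wA⟫) - f (r s s' + γ * ⟪x s', wB⟫))) := by
  simp only [tdExpected, tdSample, inner_sub_right, inner_sum, inner_smul_right,
    real_inner_comm (x _) v, ← sum_sub_distrib]
  exact sum_congr rfl fun s _ => sum_congr rfl fun s' _ => by ring

variable {D P}

theorem isCoupling_of_stationary (hD : ∀ s, 0 ≤ D s) (hP : ∀ s s', 0 ≤ P s s')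
    (hP1 : ∀ s, ∑ s', P s s' = 1) (hstat : ∀ s', ∑ s, D s * P s s' = D s') :
    IsCoupling (fun s s' => D s * P s s') D D where
  nonneg s s' := mul_nonneg (hD s) (hP s s')
  sum_right s := by rw [← mul_sum, hP1, mul_one]
  sum_left := hstat

theorem td_expected_cross_product_general (x : S → EuclideanSpace ℝ (Fin d)) (r : S → S → ℝ)
    (γ : ℝ) {c : ℝ} {K : ℝ≥0} {f : ℝ → ℝ} (hD : ∀ s, 0 ≤ D s) (hP : ∀ s s', 0 ≤ P s s')
    (hP1 : ∀ s, ∑ s', P s s' = 1) (hstat : ∀ s', ∑ s, D s * P s s' = D s')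
    (hf : StronglyMonotone c f) (hfK : LipschitzWith K f) (wA wB : EuclideanSpace ℝ (Fin d)) :
    (c - |γ| * K) * ∑ s, D s * (⟪x s, wA⟫ - ⟪x s, wB⟫) ^ 2 ≤
      ⟪wA - wB, tdExpected D P x r γ f wB - tdExpected D P x r γ f wA⟫ := by
  have hQ := isCoupling_of_stationary hD hP hP1 hstat
  have hcurrent := hQ.le_sum_mul_sub_of_stronglyMonotone hf (⟪x ·, wA⟫) (⟪x ·, wB⟫)
  have hnext := hQ.sum_mul_sub_le_of_lipschitzWith
    (fun s s' => lipschitzWith_comp_add_mul hfK (r s s') γ)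
    (fun s => ⟪x s, wA⟫ - ⟪x s, wB⟫) (⟪x ·, wA⟫) (⟪x ·, wB⟫)
  rw [add_self_div_two, NNReal.coe_mul, coe_nnnorm, Real.norm_eq_abs, mul_comm (K : ℝ)] at hnext
  rw [inner_tdExpected_sub, sub_mul]
  simp only [inner_sub_right _ wA wB]
  exact sub_le_sub hcurrent hnext

end TD

/-- the expected TD update satisfies
`⟨w^A − w^B, ḡ(w^B) − ḡ(w^A)⟩ ≥ (1/L − γL) Σ_s D(s)(z_{w^A}(s) − z_{w^B}(s))²`. -/
theorem td_expected_cross_product {S : Type*} [Fintype S] [Nonempty S] {d : ℕ}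
    (D : S → ℝ) (P : S → S → ℝ) (x : S → EuclideanSpace ℝ (Fin d))
    (r : S → S → ℝ) (γ L : ℝ) (f : ℝ → ℝ)
    (hD : ∀ s, 0 ≤ D s) (hD1 : ∑ s, D s = 1)
    (hP : ∀ s s', 0 ≤ P s s') (hP1 : ∀ s, ∑ s', P s s' = 1)
    (hstat : ∀ s', ∑ s, D s * P s s' = D s')
    (hx : ∀ s, ‖x s‖ ≤ 1)
    (hγ0 : 0 ≤ γ) (hγ1 : γ < 1) (hL : 1 ≤ L)
    (hf : StrictMono f)
    (hfLip : ∀ a b : ℝ, (1 / L) * |a - b| ≤ |f a - f b| ∧ |f a - f b| ≤ L * |a - b|)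
    (wA wB : EuclideanSpace ℝ (Fin d)) :
    ⟪wA - wB, tdExpected D P x r γ f wB - tdExpected D P x r γ f wA⟫ ≥
      (1 / L - γ * L) * ∑ s, D s * (⟪x s, wA⟫ - ⟪x s, wB⟫) ^ 2 := by
  lift L to ℝ≥0 using zero_le_one.trans hL
  simpa only [abs_of_nonneg hγ0] using td_expected_cross_product_general x r γ hD hP hP1 hstat
    (stronglyMonotone_of_monotone hf.monotone fun a b => (hfLip a b).1)
    (LipschitzWith.of_dist_le_mul fun a b => (hfLip a b).2) wA wB
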